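/- arXiv:1803.04753 — 3 statements merged into one kernel-verified Lean document; each statement's English description precedes it below -/
import Mathlib

section
/- Let K be a field of characteristic zero equipped with a derivation D : K → K (an additive map satisfying D(xy) = x·D(y) + y·D(x)), and let C = {x ∈ K : D(x) = 0} be its field of constants. Let n ≥ 1 and let x₁,…,xₙ, y₁,…,yₙ ∈ K be such that for each i one has D(yᵢ) = yᵢ·D(xᵢ), yᵢ ≠ 0 and D(xᵢ) ≠ 0 (i.e. the (xᵢ,yᵢ) are non-constant solutions of the exponential differential equation Dy = y·Dx). Then the transcendence degree over C of the subfield C(x₁,…,xₙ,y₁,…,yₙ) of K generated by C and the xᵢ, yᵢ is at least d + 1, where d is the dimension of the ℚ-linear span of the images of x₁,…,xₙ in the quotient ℚ-vector space K/C. -/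
/-- The transcendence degree of a subfield `E` of `K` over a subfield `F`:
the supremum of the cardinalities of subsets of `E` that are algebraically
independent over `F`. -/
noncomputable def Subfield.trdeg {K : Type*} [Field K] (F E : Subfield K) : Cardinal :=
  ⨆ t : {t : Set K // t ⊆ (E : Set K) ∧ AlgebraicIndependent F ((↑) : t → K)}, Cardinal.mk t.1

/-- The subfield of `K` generated by a subfield `F` together with a set `s`. -/
def Subfield.extend {K : Type*} [Field K] (F : Subfield K) (s : Set K) : Subfield K :=
  Subfield.closure ((F : Set K) ∪ s)

/-! Let `ωᵢ = dyᵢ/yᵢ - dxᵢ` in the module of Kähler differentials of `K` over `C`. The differential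
equation makes `ωᵢ` invariant under the Lie derivative along `D`. Hence a shortest `K`-linear
relation between the `ωᵢ`, normalized so that some coefficient is `1`, has coefficients in `C`.
A relation `∑ cᵢ ωᵢ = 0` over `C` says that `∑ cᵢ dyᵢ/yᵢ` is exact, so `∑ cᵢ res (dyᵢ/yᵢ) = 0` at
every place, where the residues are rational numbers. Applying a `ℚ`-linear functional `l` of `C`
which takes integer values `mᵢ` on the `cᵢ` yields `res (dz/z) = 0` for `z = ∏ yᵢ ^ mᵢ`. At a place
where `z` is a uniformizer this is absurd, so `z` is algebraic over `C`; then `D z = 0`, that is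
`∑ mᵢ D xᵢ = 0`. Thus the `ωᵢ` are linearly independent over `K` if the `D xᵢ` are so over `ℚ`, and
a further `dx` with `D x ≠ 0` is independent of them because contraction with `D` kills every `ωᵢ`.
Differentials of generators span a space of dimension at most the transcendence degree. -/

open KaehlerDifferential Module
open Differential (logDeriv logDeriv_algebraMap logDeriv_prod)
open scoped LaurentSeries Differential IntermediateField IntermediateField.algebraAdjoinAdjoin

-- Takes precedence over `HahnSeries.powerSeriesAlgebra`, through which the scalar action of `R` on
-- `R⸨X⸩` would not be definitionally the coefficientwise one.
attribute [local instance 2000] HahnSeries.instAlgebra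

section Euler

/-- The Euler derivation `t d/dt` of the ring of Laurent series in `t`. -/
noncomputable def eulerDerivation (R : Type*) [CommRing R] : Derivation R R⸨X⸩ R⸨X⸩ :=
  let θ : R⸨X⸩ →ₗ[R] R⸨X⸩ :=
    { toFun f :=
        { coeff n := n * f.coeff n
          isPWO_support' := f.isPWO_support.mono fun _ ↦ right_ne_zero_of_mul }
      map_add' _ _ := HahnSeries.ext <| funext fun _ ↦ mul_add _ _ _
      map_smul' _ _ := HahnSeries.ext <| funext fun _ ↦ mul_left_comm _ _ _ }
  Derivation.mk' θ fun f g ↦ by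
    have support_θ (f : R⸨X⸩) : (θ f).support ⊆ f.support := fun _ ↦ right_ne_zero_of_mul
    have coeff_θ (f : R⸨X⸩) (n : ℤ) : (θ f).coeff n = n * f.coeff n := rfl
    ext n
    rw [smul_eq_mul, smul_eq_mul, mul_comm g, HahnSeries.coeff_add,
      HahnSeries.coeff_mul_right' g.isPWO_support (support_θ g),
      HahnSeries.coeff_mul_left' f.isPWO_support (support_θ f), coeff_θ, HahnSeries.coeff_mul,
      Finset.mul_sum, ← Finset.sum_add_distrib]
    refine Finset.sum_congr rfl fun ij hij ↦ ?_
    rw [coeff_θ, coeff_θ, ← (Finset.mem_antidiagonal.1 hij).2.2]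
    push_cast
    ring

theorem coeff_eulerDerivation {R : Type*} [CommRing R] (f : R⸨X⸩) (n : ℤ) :
    (eulerDerivation R f).coeff n = n * f.coeff n := rfl

theorem coeff_zero_eulerDerivation_div_self {M : Type*} [Field M] {f : M⸨X⸩} (hf : f ≠ 0) :
    (eulerDerivation M f / f).coeff 0 = f.order := by
  set h : M⸨X⸩ := eulerDerivation M f / f - HahnSeries.C (f.order : M) with h_def
  suffices h.coeff 0 = 0 by
    rwa [h_def, HahnSeries.coeff_sub, HahnSeries.C_apply, HahnSeries.coeff_single_same,
      sub_eq_zero] at this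
  have coeff_h_mul (n : ℤ) : (h * f).coeff n = (n - f.order) * f.coeff n := by
    rw [h_def, sub_mul, div_mul_cancel₀ _ hf, HahnSeries.coeff_sub, coeff_eulerDerivation,
      HahnSeries.C_mul_eq_smul, HahnSeries.coeff_smul, smul_eq_mul, sub_mul]
  by_contra h0
  have order_h : h.order ≤ 0 := HahnSeries.order_le_of_coeff_ne_zero h0
  have h_ne : h ≠ 0 := HahnSeries.ne_zero_of_coeff_ne_zero h0
  have := HahnSeries.coeff_order_eq_zero.not.2 (mul_ne_zero h_ne hf)
  rw [coeff_h_mul, HahnSeries.order_mul h_ne hf] at this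
  rcases order_h.lt_or_eq with order_h | order_h
  · exact this (by rw [HahnSeries.coeff_eq_zero_of_lt_order (by lia), mul_zero])
  · exact this (by simp [order_h])

end Euler

section Trace

theorem exists_derivation_algebraMap_eq {R F : Type*} [CommRing R] [Field F] [CharZero F]
    [Algebra R F] (Q : Type*) [Field Q] [Algebra R Q] [Algebra F Q] [IsScalarTower R F Q]
    [Algebra.IsAlgebraic F Q] (δ : Derivation R F F) :
    ∃ δ' : Derivation R Q Q, ∀ a, δ' (algebraMap F Q a) = algebraMap F Q (δ a) := by
  have : Algebra.FormallyEtale F Q := .of_isSeparable F Q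
  let e := tensorKaehlerEquivOfFormallyEtale R F Q
  let l : TensorProduct F Q Ω[F⁄R] →ₗ[Q] Q :=
    ((Algebra.linearMap F Q).comp δ.liftKaehlerDifferential).liftBaseChange Q
  refine ⟨(l.comp e.symm.toLinearMap).compDer (D R Q), fun a ↦ ?_⟩
  simp [e, l, tensorKaehlerEquivOfFormallyEtale_symm_D_algebraMap]

theorem normalizedTrace_coe {F Q : Type*} [Field F] [CharZero F] [Field Q] [Algebra F Q]
    [Algebra.IsAlgebraic F Q] (L : IntermediateField F Q) [FiniteDimensional F L] (a : L) :
    Algebra.normalizedTrace F Q (a : Q) = (finrank F L : F)⁻¹ • Algebra.trace F L a := by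
  rw [Algebra.normalizedTrace_intermediateField,
    Algebra.normalizedTrace_eq_of_finiteDimensional_apply]

variable {F : Type*} [Field F] [CharZero F] [Differential F]

theorem exists_differentialAlgebra (Q : Type*) [Field Q] [Algebra F Q] [Algebra.IsAlgebraic F Q] :
    ∃ _ : Differential Q, DifferentialAlgebra F Q := by
  obtain ⟨δ, hδ⟩ := exists_derivation_algebraMap_eq Q (Differential.deriv (R := F))
  let _ : Differential Q := ⟨δ⟩
  exact ⟨_, ⟨hδ⟩⟩

section Finite

variable {L : Type*} [Field L] [Differential L] [Algebra F L] [DifferentialAlgebra F L]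
  [FiniteDimensional F L]

theorem trace_deriv (a : L) : Algebra.trace F L a′ = (Algebra.trace F L a)′ := by
  obtain ⟨_, _⟩ := exists_differentialAlgebra (F := F) (AlgebraicClosure F)
  apply (algebraMap F (AlgebraicClosure F)).injective
  rw [← deriv_algebraMap, trace_eq_sum_embeddings, trace_eq_sum_embeddings, map_sum]
  exact Finset.sum_congr rfl fun σ _ ↦ Differential.algHom_deriv' σ σ.injective a

theorem trace_logDeriv (a : L) : Algebra.trace F L (logDeriv a) = logDeriv (Algebra.norm F a) := by
  obtain ⟨_, _⟩ := exists_differentialAlgebra (F := F) (AlgebraicClosure F)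
  rcases eq_or_ne a 0 with rfl | ha
  · simp
  apply (algebraMap F (AlgebraicClosure F)).injective
  rw [← logDeriv_algebraMap, trace_eq_sum_embeddings, Algebra.norm_eq_prod_embeddings,
    logDeriv_prod _ _ _ fun σ _ ↦ (map_ne_zero σ).2 ha]
  refine Finset.sum_congr rfl fun σ _ ↦ ?_
  rw [Differential.logDeriv, Differential.logDeriv, map_div₀,
    Differential.algHom_deriv' σ σ.injective a]

end Finite

variable {Q : Type*} [Field Q] [Algebra F Q] [Algebra.IsAlgebraic F Q] [Differential Q]
  [DifferentialAlgebra F Q]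

theorem normalizedTrace_deriv (a : Q) :
    Algebra.normalizedTrace F Q a′ = (Algebra.normalizedTrace F Q a)′ := by
  have : FiniteDimensional F F⟮a⟯ :=
    IntermediateField.adjoin.finiteDimensional (Algebra.IsIntegral.isIntegral a)
  let b := IntermediateField.AdjoinSimple.gen F a
  calc Algebra.normalizedTrace F Q (b : Q)′
    _ = Algebra.normalizedTrace F Q (b′ : F⟮a⟯) := congrArg _ (deriv_algebraMap b)
    _ = (Algebra.normalizedTrace F Q (b : Q))′ := by
      simp [normalizedTrace_coe, trace_deriv, Derivation.leibniz_inv]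

theorem exists_normalizedTrace_logDeriv_eq {a : Q} (ha : a ≠ 0) :
    ∃ n : ℕ, ∃ N : F, N ≠ 0 ∧
      Algebra.normalizedTrace F Q (logDeriv a) = (n : F)⁻¹ • logDeriv N := by
  have : FiniteDimensional F F⟮a⟯ :=
    IntermediateField.adjoin.finiteDimensional (Algebra.IsIntegral.isIntegral a)
  let b := IntermediateField.AdjoinSimple.gen F a
  have hb : b ≠ 0 := fun h ↦ ha (congrArg Subtype.val h)
  refine ⟨finrank F F⟮a⟯, Algebra.norm F b, Algebra.norm_ne_zero_iff.2 hb, ?_⟩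
  calc Algebra.normalizedTrace F Q (logDeriv (b : Q))
    _ = Algebra.normalizedTrace F Q (logDeriv b : F⟮a⟯) := congrArg _ (logDeriv_algebraMap b)
    _ = _ := by rw [normalizedTrace_coe, trace_logDeriv]

end Trace

section LaurentResidue

instance {M : Type*} [Field M] [CharZero M] : CharZero M⸨X⸩ :=
  charZero_of_injective_algebraMap (algebraMap M M⸨X⸩).injective

variable {M : Type*} [Field M] [CharZero M] (Q : Type*) [Field Q] [Algebra M⸨X⸩ Q]
  [Algebra.IsAlgebraic M⸨X⸩ Q] [Algebra M Q] [IsScalarTower M M⸨X⸩ Q]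

variable (M) in
/-- The residue of the differential form `h dt/t`, as a function of `h` in an algebraic extension of
the field of Laurent series in `t`; along the extension, the residue is averaged by means of the
normalized trace. -/
noncomputable def logResidue : Q →ₗ[M] M :=
  HahnSeries.coeff.linearMap 0 ∘ₗ (Algebra.normalizedTrace M⸨X⸩ Q).restrictScalars M

theorem logResidue_one : logResidue M Q 1 = 1 := by
  have : Algebra.normalizedTrace M⸨X⸩ Q 1 = 1 := by
    rw [← map_one (algebraMap M⸨X⸩ Q), Algebra.normalizedTrace_algebraMap_apply,
      Algebra.normalizedTrace_self_apply]
  simp [logResidue, this]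

variable {Q} {δ : Derivation M Q Q}
  (hδ : ∀ f : M⸨X⸩, δ (algebraMap M⸨X⸩ Q f) = algebraMap M⸨X⸩ Q (eulerDerivation M f))
include hδ

theorem logResidue_derivation (a : Q) : logResidue M Q (δ a) = 0 := by
  let _ : Differential M⸨X⸩ := ⟨(eulerDerivation M).restrictScalars ℤ⟩
  let _ : Differential Q := ⟨δ.restrictScalars ℤ⟩
  have : DifferentialAlgebra M⸨X⸩ Q := ⟨hδ⟩
  calc (Algebra.normalizedTrace M⸨X⸩ Q a′).coeff 0
    _ = (eulerDerivation M (Algebra.normalizedTrace M⸨X⸩ Q a)).coeff 0 := by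
      rw [normalizedTrace_deriv]; rfl
    _ = 0 := by simp [coeff_eulerDerivation]

theorem exists_logResidue_derivation_div_self_eq {a : Q} (ha : a ≠ 0) :
    ∃ q : ℚ, logResidue M Q (δ a / a) = q := by
  let _ : Differential M⸨X⸩ := ⟨(eulerDerivation M).restrictScalars ℤ⟩
  let _ : Differential Q := ⟨δ.restrictScalars ℤ⟩
  have : DifferentialAlgebra M⸨X⸩ Q := ⟨hδ⟩
  obtain ⟨n, N, hN, h⟩ := exists_normalizedTrace_logDeriv_eq (F := M⸨X⸩) ha
  refine ⟨(n : ℚ)⁻¹ * N.order, ?_⟩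
  calc (Algebra.normalizedTrace M⸨X⸩ Q (logDeriv a)).coeff 0
    _ = ((n : M⸨X⸩)⁻¹ • (eulerDerivation M N / N)).coeff 0 := by rw [h]; rfl
    _ = (n : M)⁻¹ • (eulerDerivation M N / N).coeff 0 := by
      rw [inv_natCast_smul_eq M⸨X⸩ M, HahnSeries.coeff_smul]
    _ = _ := by rw [coeff_zero_eulerDerivation_div_self hN]; push_cast; rfl

end LaurentResidue

section Constants

/-- A derivation whose constants contain the ring `S`, viewed as a derivation over `S`. -/
def derivationOverConstants {R S A V : Type*} [CommRing R] [CommRing S] [CommRing A] [Algebra R A]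
    [Algebra S A] [AddCommGroup V] [Module A V] [Module R V] [Module S V] [IsScalarTower S A V]
    (δ : Derivation R A V) (h : ∀ s : S, δ (algebraMap S A s) = 0) : Derivation S A V :=
  Derivation.mk'
    { toFun := δ
      map_add' := δ.map_add
      map_smul' s a := by
        rw [Algebra.smul_def, δ.leibniz, h, smul_zero, add_zero, algebraMap_smul,
          RingHom.id_apply] }
    δ.leibniz

variable {R K V : Type*} [CommRing R] [Field K] [CharZero K] [Algebra R K] [AddCommGroup V]
  [Module R V] [Module K V]

theorem derivation_eq_zero_of_isAlgebraic [FaithfulSMul R K] (δ : Derivation R K V) {a : K}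
    (ha : IsAlgebraic R a) : δ a = 0 := by
  have hinj := FaithfulSMul.algebraMap_injective R K
  have : IsDomain R := hinj.isDomain
  have : CharZero R := (algebraMap R K).charZero
  obtain ⟨p, hp, hpa⟩ := ha
  induction hn : p.natDegree using Nat.strong_induction_on generalizing p with | _ n ih
  by_cases hp' : Polynomial.aeval a p.derivative = 0
  · have p_not_const : p.natDegree ≠ 0 := fun h ↦ hp <| by
      rw [Polynomial.eq_C_of_natDegree_eq_zero h, Polynomial.aeval_C,
        map_eq_zero_iff _ hinj] at hpa
      rw [Polynomial.eq_C_of_natDegree_eq_zero h, hpa, map_zero]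
    exact ih _ (hn ▸ Polynomial.natDegree_derivative_lt p_not_const) _
      (Polynomial.derivative_eq_zero.not.2 p_not_const) hp' rfl
  · have := δ.map_aeval p a
    rw [hpa, map_zero] at this
    exact (smul_eq_zero.1 this.symm).resolve_left hp'

theorem derivation_eq_zero_of_isAlgebraic_adjoin [IsScalarTower R K V] (δ : Derivation R K V)
    {s : Set K} (hs : ∀ b ∈ s, δ b = 0) {a : K} (ha : IsAlgebraic (Algebra.adjoin R s) a) :
    δ a = 0 :=
  have h (b : Algebra.adjoin R s) : δ b = 0 := Derivation.eqOn_adjoin (D2 := 0) hs b.2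
  derivation_eq_zero_of_isAlgebraic (derivationOverConstants δ h) ha

end Constants

section Place

variable {C K Q : Type*} [Field C] [Field K] [Algebra C K] [Field Q] [Algebra C Q]

theorem exists_intermediateField_transcendental_isAlgebraic {z : K} (hz : Transcendental C z) :
    ∃ M : IntermediateField C K, Transcendental M z ∧ Algebra.IsAlgebraic M⟮z⟯ K := by
  have hz' : AlgebraicIndepOn C id {z} := by
    simpa [AlgebraicIndepOn] using
      (algebraicIndependent_singleton_iff (x := fun i : ({z} : Set K) ↦ (i : K)) ⟨z, rfl⟩).2 hz
  obtain ⟨T, hzT, hT⟩ := exists_isTranscendenceBasis_superset hz'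
  have hzT : z ∈ T := hzT rfl
  let M := IntermediateField.adjoin C (T \ {z})
  refine ⟨M, ?_, ?_⟩
  · have := hT.1.transcendental_adjoin (s := {i | (i : K) ≠ z}) (i := ⟨z, hzT⟩) (by simp)
    rw [show Subtype.val '' {i : T | (i : K) ≠ z} = T \ {z} by ext; simp [and_comm]] at this
    exact (IsFractionRing.isAlgebraic_iff (Algebra.adjoin C (T \ {z})) M K).not.1 this
  · have := hT.isAlgebraic_field
    have h := IntermediateField.adjoin_adjoin_left C (T \ {z}) {z}
    rw [Set.sdiff_union_self, Set.union_eq_self_of_subset_right (by simpa)] at h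
    rw [Subtype.range_coe, ← h] at this
    exact this

theorem exists_algHom_apply_eq_of_transcendental [IsAlgClosed Q] {z : K} (hz : Transcendental C z)
    [Algebra.IsAlgebraic C⟮z⟯ K] {w : Q} (hw : Transcendental C w) :
    ∃ ψ : K →ₐ[C] Q, ψ z = w := by
  let e : C⟮z⟯ ≃ₐ[C] C⟮w⟯ := (RatFunc.algEquivOfTranscendental z hz).symm.trans
    (RatFunc.algEquivOfTranscendental w hw)
  obtain ⟨ψ, hψ⟩ := IsAlgClosed.surjective_domRestrict_of_isAlgebraic (E := K)
    (C⟮w⟯.val.comp e.toAlgHom)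
  let g := IntermediateField.AdjoinSimple.gen C z
  refine ⟨ψ, ?_⟩
  calc ψ z = e g := DFunLike.congr_fun hψ g
    _ = w := by simp [e, g]

end Place

section LogForm

variable (R : Type*) {A V : Type*} [CommRing R] [CommRing A] [Algebra R A]

/-- The logarithmic differential form `du/u` of a unit `u`. -/
noncomputable def dlog (u : Aˣ) : Ω[A⁄R] := (↑u⁻¹ : A) • D R A u

theorem dlog_mul (u v : Aˣ) : dlog R (u * v) = dlog R u + dlog R v := by
  simp [dlog, smul_smul, mul_assoc, mul_comm (↑u⁻¹ : A), add_comm]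

theorem dlog_prod_zpow {ι : Type*} (s : Finset ι) (u : ι → Aˣ) (m : ι → ℤ) :
    dlog R (∏ i ∈ s, u i ^ m i) = ∑ i ∈ s, m i • dlog R (u i) := by
  let dlogHom : Additive Aˣ →+ Ω[A⁄R] := .mk' (fun u ↦ dlog R u.toMul) (dlog_mul R)
  calc dlogHom (.ofMul (∏ i ∈ s, u i ^ m i))
    _ = ∑ i ∈ s, dlogHom (m i • .ofMul (u i)) := by rw [ofMul_prod, map_sum]; rfl
    _ = ∑ i ∈ s, m i • dlogHom (.ofMul (u i)) := by simp only [map_zsmul]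

variable {R} [AddCommGroup V] [Module R V] [Module A V] [IsScalarTower R A V]

theorem liftKaehlerDifferential_dlog (E : Derivation R A V) (u : Aˣ) :
    E.liftKaehlerDifferential (dlog R u) = (↑u⁻¹ : A) • E u := by
  rw [dlog, map_smul, E.liftKaehlerDifferential_comp_D]

end LogForm

section Residue

theorem exists_residue_of_isAlgebraic {M K : Type*} [Field M] [CharZero M] [Field K] [Algebra M K]
    {z : Kˣ} (hz : Transcendental M (z : K)) [Algebra.IsAlgebraic M⟮(z : K)⟯ K] :
    ∃ res : Ω[K⁄M] →ₗ[M] M, (∀ v, res (D M K v) = 0) ∧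
      (∀ u, ∃ q : ℚ, res (dlog M u) = q) ∧ res (dlog M z) = 1 := by
  let Q := AlgebraicClosure M⸨X⸩
  obtain ⟨δ, hδ⟩ := exists_derivation_algebraMap_eq Q (eulerDerivation M)
  let t : Q := algebraMap M⸨X⸩ Q (HahnSeries.single 1 1)
  have t_ne_zero : t ≠ 0 := by simp [t]
  have δ_t : δ t = t := by
    rw [hδ]
    congr 1
    ext n
    rw [coeff_eulerDerivation]
    rcases eq_or_ne n 1 with rfl | hn
    · simp
    · simp [HahnSeries.coeff_single_of_ne hn]
  have ht : Transcendental M t := fun h ↦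
    t_ne_zero (δ_t.symm.trans (derivation_eq_zero_of_isAlgebraic δ h))
  obtain ⟨ψ, hψ⟩ := exists_algHom_apply_eq_of_transcendental hz ht
  let _ : Algebra K Q := ψ.toRingHom.toAlgebra
  have : IsScalarTower M K Q := .of_algHom ψ
  let E : Derivation M K Q := δ.compAlgebraMap K
  have E_dlog (u : Kˣ) : E.liftKaehlerDifferential (dlog M u) = δ (ψ u) / ψ u := by
    rw [liftKaehlerDifferential_dlog, Algebra.smul_def, Units.val_inv_eq_inv_val, map_inv₀,
      mul_comm, ← div_eq_mul_inv]
    rfl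
  refine ⟨logResidue M Q ∘ₗ E.liftKaehlerDifferential.restrictScalars M, fun v ↦ ?_, fun u ↦ ?_, ?_⟩
  · simpa [E] using logResidue_derivation hδ _
  · simpa [E_dlog] using exists_logResidue_derivation_div_self_eq hδ (by simp)
  · simp [E_dlog, hψ, δ_t, div_self t_ne_zero, logResidue_one]

theorem exists_residue {C K : Type*} [Field C] [CharZero C] [Field K] [Algebra C K] {z : Kˣ}
    (hz : Transcendental C (z : K)) :
    ∃ res : Ω[K⁄C] →ₗ[C] K, (∀ v, res (D C K v) = 0) ∧
      (∀ u, ∃ q : ℚ, res (dlog C u) = q) ∧ res (dlog C z) = 1 := by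
  obtain ⟨M, hzM, _⟩ := exists_intermediateField_transcendental_isAlgebraic hz
  obtain ⟨res, res_D, res_dlog, res_z⟩ := exists_residue_of_isAlgebraic hzM
  have map_dlog (u : Kˣ) : map C M K K (dlog C u) = dlog M u := by simp [dlog]
  refine ⟨M.val.toLinearMap ∘ₗ res.restrictScalars C ∘ₗ (map C M K K).restrictScalars C,
    fun v ↦ ?_, fun u ↦ ?_, ?_⟩
  · simp [res_D]
  · obtain ⟨q, hq⟩ := res_dlog u
    exact ⟨q, by simp [map_dlog, hq]⟩
  · simp [map_dlog, res_z]

theorem exists_dual_eq_intCast {V ι : Type*} [AddCommGroup V] [Module ℚ V] (c : ι → V)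
    (s : Finset ι) {j : ι} (hj : j ∈ s) (hcj : c j ≠ 0) :
    ∃ (l : Dual ℚ V) (m : ι → ℤ), (∀ i ∈ s, l (c i) = m i) ∧ m j ≠ 0 := by
  obtain ⟨l, hl⟩ : ∃ l : Dual ℚ V, l (c j) ≠ 0 := by
    simpa using (forall_dual_apply_eq_zero_iff ℚ (c j)).not.2 hcj
  obtain ⟨⟨b, hb⟩, h⟩ := IsLocalization.exist_integer_multiples (nonZeroDivisors ℤ) s (l ∘ c)
  choose! m hm using h
  have hm (i) (hi : i ∈ s) : b * l (c i) = m i := by simpa using (hm i hi).symm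
  refine ⟨b • l, m, fun i hi ↦ by simpa using hm i hi, fun h0 ↦ ?_⟩
  have := hm j hj
  simp [h0, nonZeroDivisors.ne_zero hb, hl] at this

theorem exists_isAlgebraic_prod_zpow {C K ι : Type*} [Field C] [CharZero C] [Field K] [Algebra C K]
    {s : Finset ι} {c : ι → C} {y : ι → Kˣ} {v : K} (h : ∑ i ∈ s, c i • dlog C (y i) = D C K v)
    {j : ι} (hj : j ∈ s) (hcj : c j ≠ 0) :
    ∃ m : ι → ℤ, m j ≠ 0 ∧ IsAlgebraic C ((∏ i ∈ s, y i ^ m i : Kˣ) : K) := by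
  obtain ⟨l, m, hlm, hmj⟩ := exists_dual_eq_intCast c s hj hcj
  refine ⟨m, hmj, by_contra fun hz ↦ ?_⟩
  obtain ⟨res, res_D, res_dlog, res_z⟩ := exists_residue hz
  choose q hq using fun i ↦ res_dlog (y i)
  have sum_q_c : ∑ i ∈ s, q i • c i = 0 := by
    have := congrArg res h
    simp only [map_sum, map_smul, hq, res_D] at this
    apply (algebraMap C K).injective
    simpa [Algebra.smul_def, mul_comm] using this
  have sum_q_m : ∑ i ∈ s, q i * m i = 0 := by
    have := congrArg l sum_q_c
    rw [map_sum, map_zero] at this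
    rw [← this]
    refine Finset.sum_congr rfl fun i hi ↦ ?_
    rw [map_smul, hlm i hi, smul_eq_mul]
  have sum_m_q : (∑ i ∈ s, m i * q i : ℚ) = (1 : K) := by
    rw [← res_z, dlog_prod_zpow]
    have : CharZero K := charZero_of_injective_algebraMap (algebraMap C K).injective
    simp [hq]
  simp [mul_comm, sum_q_m] at sum_m_q

end Residue

section LieInvariant

/-- The Lie derivative of the differential form `ω` along `D` vanishes. The Lie derivative is
determined by its pairing with the derivations `E`, which is given by the Leibniz rule
`⟨L_D ω, E⟩ = D ⟨ω, E⟩ - ⟨ω, ⁅D, E⁆⟩`. -/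
def IsLieInvariant {R A : Type*} [CommRing R] [CommRing A] [Algebra R A] (D : Derivation R A A)
    (ω : Ω[A⁄R]) : Prop :=
  ∀ E : Derivation R A A,
    D (E.liftKaehlerDifferential ω) = ⁅D, E⁆.liftKaehlerDifferential ω

theorem isLieInvariant_dlog_sub {R A : Type*} [CommRing R] [CommRing A] [Algebra R A]
    {D : Derivation R A A} {x : A} {y : Aˣ} (h : D y = y * D x) :
    IsLieInvariant D (dlog R y - KaehlerDifferential.D R A x) := fun E ↦ by
  simp only [map_sub, liftKaehlerDifferential_dlog, Derivation.liftKaehlerDifferential_comp_D,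
    Derivation.commutator_apply, h, Derivation.leibniz, smul_eq_mul,
    D.leibniz_of_mul_eq_one y.inv_mul]
  linear_combination (E (D x) - ↑y⁻¹ * E y * D x) * y.inv_mul

variable {C K : Type*} [Field C] [Field K] [Algebra C K] {D : Derivation C K K} {ι : Type*}
  {ω : ι → Ω[K⁄C]} (hω : ∀ i, IsLieInvariant D (ω i))
include hω

theorem sum_derivation_smul_eq_zero {s : Finset ι} {g : ι → K} (h : ∑ i ∈ s, g i • ω i = 0) :
    ∑ i ∈ s, D (g i) • ω i = 0 := by
  rw [← forall_dual_apply_eq_zero_iff K]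
  intro φ
  let E : Derivation C K K := φ.compDer (KaehlerDifferential.D C K)
  have hE : E.liftKaehlerDifferential = φ :=
    Derivation.liftKaehlerDifferential_unique _ _ E.liftKaehlerDifferential_comp
  calc φ (∑ i ∈ s, D (g i) • ω i)
    _ = E.liftKaehlerDifferential (∑ i ∈ s, D (g i) • ω i) := by rw [hE]
    _ = D (E.liftKaehlerDifferential (∑ i ∈ s, g i • ω i))
        - ⁅D, E⁆.liftKaehlerDifferential (∑ i ∈ s, g i • ω i) := by
      simp [← hω _ E, Finset.sum_add_distrib, mul_comm]
    _ = 0 := by simp [h]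

theorem linearIndependent_of_isLieInvariant (hD : ∀ a, D a = 0 → a ∈ (algebraMap C K).range)
    (h : LinearIndependent C ω) : LinearIndependent K ω := by
  classical
  rw [linearIndependent_iff']
  intro s
  induction s using Finset.induction_on with
  | empty => simp
  | insert a s ha ih =>
  intro g hg
  by_cases hga : g a = 0
  · rw [Finset.sum_insert ha, hga, zero_smul, zero_add] at hg
    exact (Finset.forall_mem_insert _ _ _).2 ⟨hga, ih g hg⟩
  let g' (i : ι) : K := (g a)⁻¹ * g i
  have hg' : ∑ i ∈ insert a s, g' i • ω i = 0 := by
    simp only [g', mul_smul, ← Finset.smul_sum, hg, smul_zero]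
  have g'_a : g' a = 1 := inv_mul_cancel₀ hga
  have D_g' (i) (hi : i ∈ insert a s) : D (g' i) = 0 := by
    have := sum_derivation_smul_eq_zero hω hg'
    rw [Finset.sum_insert ha, g'_a, D.map_one_eq_zero, zero_smul, zero_add] at this
    rcases Finset.mem_insert.1 hi with rfl | hi
    · rw [g'_a, D.map_one_eq_zero]
    · exact ih _ this i hi
  choose! c hc using fun i hi ↦ hD _ (D_g' i hi)
  have c_a : c a = 0 := by
    refine linearIndependent_iff'.1 h (insert a s) c ?_ a (Finset.mem_insert_self a s)
    rw [← hg']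
    refine Finset.sum_congr rfl fun i hi ↦ ?_
    rw [← hc i hi, algebraMap_smul]
  have := hc a (Finset.mem_insert_self a s)
  simp [c_a, g'_a] at this

end LieInvariant

section TranscendenceDegree

theorem span_derivation_image_le_of_isAlgebraic_adjoin {R K V : Type*} [CommRing R] [Field K]
    [CharZero K] [Algebra R K] [AddCommGroup V] [Module R V] [Module K V] [IsScalarTower R K V]
    (δ : Derivation R K V) {S T : Set K} (h : ∀ a ∈ S, IsAlgebraic (Algebra.adjoin R T) a) :
    Submodule.span K (δ '' S) ≤ Submodule.span K (δ '' T) := by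
  let W := Submodule.span K (δ '' T)
  rw [Submodule.span_le, Set.image_subset_iff]
  intro a ha
  have mkQ_T (b) (hb : b ∈ T) : W.mkQ.compDer δ b = 0 :=
    (Submodule.Quotient.mk_eq_zero W).2 (Submodule.subset_span (Set.mem_image_of_mem δ hb))
  exact (Submodule.Quotient.mk_eq_zero W).1
    (derivation_eq_zero_of_isAlgebraic_adjoin (W.mkQ.compDer δ) mkQ_T (h a ha))

theorem rank_span_D_image_le_trdeg {K : Type*} [Field K] [CharZero K] (C : Subfield K)
    (S : Set K) :
    Module.rank K (Submodule.span K (D C K '' S)) ≤ Subfield.trdeg C (C.extend S) := by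
  obtain ⟨t, ht⟩ := (AlgebraicIndependent.matroid C K).exists_isBasis S
  obtain ⟨t_indep, t_sub, halg⟩ := AlgebraicIndependent.matroid_isBasis_iff.1 ht
  calc Module.rank K (Submodule.span K (D C K '' S))
    _ ≤ Module.rank K (Submodule.span K (D C K '' t)) :=
      Submodule.rank_mono (span_derivation_image_le_of_isAlgebraic_adjoin (D C K) halg)
    _ ≤ Cardinal.mk (D C K '' t) := rank_span_le _
    _ ≤ Cardinal.mk t := Cardinal.mk_image_le
    _ ≤ _ := le_ciSup (f := fun s : {s : Set K // s ⊆ C.extend S ∧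
        AlgebraicIndependent C ((↑) : s → K)} ↦ Cardinal.mk s.1) Cardinal.bddAbove_of_small
      ⟨t, t_sub.trans (Set.subset_union_right.trans Subfield.subset_closure), t_indep⟩

end TranscendenceDegree

section Exponential

variable {C K ι : Type*} [Field C] [Field K] [CharZero K] [Algebra C K] {D : Derivation C K K}
  {x : ι → K} {y : ι → Kˣ} (hxy : ∀ i, D (y i) = y i * D (x i))
  (hx : LinearIndependent ℚ (D ∘ x))
include hxy hx

theorem linearIndependent_dlog_sub :
    LinearIndependent C fun i ↦ dlog C (y i) - KaehlerDifferential.D C K (x i) := by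
  have : CharZero C := (algebraMap C K).charZero
  rw [linearIndependent_iff']
  intro s c hc j hj
  by_contra hcj
  simp_rw [smul_sub, Finset.sum_sub_distrib, ← Derivation.map_smul, ← map_sum, sub_eq_zero] at hc
  obtain ⟨m, hmj, halg⟩ := exists_isAlgebraic_prod_zpow hc hj hcj
  have sum_m : ∑ i ∈ s, (m i : ℚ) • D (x i) = 0 := by
    calc ∑ i ∈ s, (m i : ℚ) • D (x i)
      _ = D.liftKaehlerDifferential (dlog C (∏ i ∈ s, y i ^ m i)) := by
        simp [dlog_prod_zpow, liftKaehlerDifferential_dlog, hxy, Int.cast_smul_eq_zsmul]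
      _ = 0 := by
        rw [liftKaehlerDifferential_dlog, derivation_eq_zero_of_isAlgebraic D halg, smul_zero]
  exact hmj (by exact_mod_cast linearIndependent_iff'.1 hx s _ sum_m j hj)

variable (hD : ∀ a, D a = 0 → a ∈ (algebraMap C K).range)
include hD

theorem linearIndependent_dlog_sub_of_constants :
    LinearIndependent K fun i ↦ dlog C (y i) - KaehlerDifferential.D C K (x i) :=
  linearIndependent_of_isLieInvariant (fun i ↦ isLieInvariant_dlog_sub (hxy i)) hD
    (linearIndependent_dlog_sub hxy hx)

theorem linearIndependent_option_dlog_sub {x₀ : K} (hx₀ : D x₀ ≠ 0) :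
    LinearIndependent K fun o : Option ι ↦ o.casesOn' (KaehlerDifferential.D C K x₀)
      fun i ↦ dlog C (y i) - KaehlerDifferential.D C K (x i) := by
  refine linearIndependent_option'.2
    ⟨linearIndependent_dlog_sub_of_constants hxy hx hD, fun hmem ↦ hx₀ ?_⟩
  suffices KaehlerDifferential.D C K x₀ ∈ LinearMap.ker D.liftKaehlerDifferential by simpa
  refine Submodule.span_le.2 (Set.range_subset_iff.2 fun i ↦ ?_) hmem
  simp [liftKaehlerDifferential_dlog, hxy]

end Exponential

universe u

theorem mk_add_one_le_trdeg {K ι : Type u} [Field K] [CharZero K] {C : Subfield K}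
    {D : Derivation C K K} (hD : ∀ a, D a = 0 → a ∈ (algebraMap C K).range) {x : ι → K}
    {y : ι → Kˣ} (hxy : ∀ i, D (y i) = y i * D (x i)) (hx : LinearIndependent ℚ (D ∘ x)) {x₀ : K}
    (hx₀ : D x₀ ≠ 0) {S : Set K} (hxS : ∀ i, x i ∈ S) (hyS : ∀ i, (y i : K) ∈ S) (hx₀S : x₀ ∈ S) :
    Cardinal.mk ι + 1 ≤ Subfield.trdeg C (C.extend S) := by
  have hli := linearIndependent_option_dlog_sub hxy hx hD hx₀
  have D_mem {a : K} (ha : a ∈ S) :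
      KaehlerDifferential.D C K a ∈ Submodule.span K (KaehlerDifferential.D C K '' S) :=
    Submodule.subset_span (Set.mem_image_of_mem _ ha)
  rw [← Cardinal.mk_option, ← Cardinal.mk_range_eq _ hli.injective, ← rank_span hli]
  refine (Submodule.rank_mono <| Submodule.span_le.2 <| Set.range_subset_iff.2 ?_).trans
    (rank_span_D_image_le_trdeg C S)
  rintro (_ | i)
  · exact D_mem hx₀S
  · exact Submodule.sub_mem _ (Submodule.smul_mem _ _ (D_mem (hyS i))) (D_mem (hxS i))

theorem ax_schanuel_exponential_general {K ι : Type*} [Field K] [CharZero K]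
    (D : Derivation ℚ K K) (C : Subfield K) (hC : (C : Set K) = {a : K | D a = 0}) (x y : ι → K)
    (hsol : ∀ i, D (y i) = y i * D (x i)) (hy : ∀ i, y i ≠ 0) (hx : ∃ i, D (x i) ≠ 0) :
    Module.rank ℚ (Submodule.span ℚ (Set.range
        fun i ↦ (Submodule.Quotient.mk (x i) : K ⧸ LinearMap.ker D.toLinearMap))) + 1 ≤
      Subfield.trdeg C (C.extend (Set.range x ∪ Set.range y)) := by
  have mem_C {a : K} : a ∈ C ↔ D a = 0 := Set.ext_iff.1 hC a
  obtain ⟨b, b_sub, b_span, b_indep⟩ := exists_linearIndependent ℚ (Set.range fun i ↦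
    (Submodule.Quotient.mk (x i) : K ⧸ LinearMap.ker D.toLinearMap))
  choose i hi using fun v : b ↦ b_sub v.2
  obtain ⟨i₀, hi₀⟩ := hx
  have D_indep : LinearIndependent ℚ (D ∘ x ∘ i) := by
    let D' : K ⧸ LinearMap.ker D.toLinearMap →ₗ[ℚ] K := Submodule.liftQ _ D.toLinearMap le_rfl
    have D'_apply : D' ∘ Subtype.val = D ∘ x ∘ i := funext fun v ↦ congrArg D' (hi v).symm
    exact D'_apply ▸ b_indep.map' D' (Submodule.ker_liftQ_eq_bot _ _ _ le_rfl)
  rw [← b_span, rank_span_set b_indep]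
  exact mk_add_one_le_trdeg (D := derivationOverConstants D fun c : C ↦ mem_C.1 c.2)
    (y := fun v ↦ Units.mk0 (y (i v)) (hy _)) (fun a ha ↦ ⟨⟨a, mem_C.2 ha⟩, rfl⟩)
    (fun v ↦ hsol _) D_indep hi₀ (by simp) (by simp) (by simp)

/-- **Ax–Schanuel** for the exponential differential equation.
If `(xᵢ, yᵢ)`, `i = 1, …, n`, are non-constant solutions of `D y = y · D x` in a
differential field `K` of characteristic zero with field of constants `C`, then
`td_C C(x̄, ȳ) ≥ d + 1`, where `d` is the dimension of the `ℚ`-linear span of the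
images of `x₁, …, xₙ` in the quotient `ℚ`-vector space `K/C`. -/
theorem ax_schanuel_exponential {K : Type*} [Field K] [CharZero K]
    (D : Derivation ℚ K K)
    (C : Subfield K) (hC : (C : Set K) = {a : K | D a = 0})
    (n : ℕ) (hn : 1 ≤ n) (x y : Fin n → K)
    (hsol : ∀ i, D (y i) = y i * D (x i))
    (hy : ∀ i, y i ≠ 0) (hx : ∀ i, D (x i) ≠ 0)
    (d : ℕ)
    (hd : d = Module.finrank ℚ (Submodule.span ℚ (Set.range
      (fun i => (Submodule.Quotient.mk (x i) : K ⧸ LinearMap.ker D.toLinearMap))))) :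
    (d + 1 : Cardinal) ≤ Subfield.trdeg C (C.extend (Set.range x ∪ Set.range y)) := by
  have : Module.Finite ℚ (Submodule.span ℚ (Set.range
    fun i ↦ (Submodule.Quotient.mk (x i) : K ⧸ LinearMap.ker D.toLinearMap))) :=
    .span_of_finite ℚ (Set.finite_range _)
  rw [hd, finrank_eq_rank]
  exact ax_schanuel_exponential_general D C hC x y hsol hy ⟨⟨0, hn⟩, hx _⟩
end

section
/- Let K be an algebraically closed field of characteristic zero, A ⊆ K a subfield, n ≥ 1, and v̄ = (v₁,…,v_{2n}) ∈ K^{2n}. Assume: (i) for every nonempty subset ī = {i₁ < … < i_k} of {1,…,n}, trdeg_A(v_{i₁},…,v_{i_k}, v_{n+i₁},…,v_{n+i_k}) ≥ k (the locus of v̄ over A is normal); and (ii) trdeg_A(v̄) > n. Let p̄ = (p₁,…,p_{2n}) ∈ K^{2n} satisfy Σᵢ pᵢ·vᵢ = 1 and trdeg_{A(v̄)}(p̄) = 2n − 1. Then trdeg_{A(p̄)}(v̄) = trdeg_A(v̄) − 1, and for every nonempty subset ī = {i₁ < … < i_k} of {1,…,n}, trdeg_{A(p̄)}(v_{i₁},…,v_{i_k},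 v_{n+i₁},…,v_{n+i_k}) ≥ k. (This is the algebraic content of the intersection-with-generic-hyperplanes lemma: intersecting a normal variety of dimension greater than n with a generic hyperplane yields a normal variety of one lower dimension.) -/
/-- The transcendence degree over a subfield `F` of the subfield generated by `F`
and a set `s`. -/
noncomputable def Subfield.trdegSet {K : Type*} [Field K] (F : Subfield K) (s : Set K) :
    Cardinal :=
  Subfield.trdeg F (F.extend s)

/-!
For `t ⊆ A(v)`, computing `trdeg_A (t, p)` in two ways gives
`trdeg_A t + trdeg_{A(t)} p = trdeg_A p + trdeg_{A(p)} t`. Since `trdeg_{A(t)} p` is at least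
`trdeg_{A(v)} p = 2n - 1`, passing from `A` to `A(p)` lowers the transcendence degree of `t` by at
most one, which is harmless when `trdeg_A t > k`. If `trdeg_A t = k`, then some `v_j` is
transcendental over `A(t)`, because `trdeg_A v > n ≥ k`. So it suffices that `p` is algebraically
independent over each `B ⊆ A(v)` over which some `v_j` is transcendental.

Suppose a nonzero polynomial `G` over `B` vanishes at `p`. As `p` is a generic point of the
hyperplane `Π_v`, `G` vanishes on all of `Π_v`. For `a` with algebraic coordinates over `B` and
`G a ≠ 0`, either `s = ∑ a_i v_i` is zero or `s⁻¹ a ∈ Π_v`, so that `s⁻¹` is a root of the nonzero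
polynomial `T ↦ G (T a)`; in both cases `s` is algebraic over `B`. Such `a` span the whole space,
so every `v_j` is algebraic over `B`.
-/

open AlgebraicIndependent MvPolynomial

section Trdeg

variable {K : Type*} [Field K]

lemma le_extend (F : Subfield K) (s : Set K) : F ≤ F.extend s :=
  fun _ hx => Subfield.subset_closure (Or.inl hx)

lemma subset_extend (F : Subfield K) (s : Set K) : s ⊆ F.extend s :=
  fun _ hx => Subfield.subset_closure (Or.inr hx)

lemma extend_le_iff {F G : Subfield K} {s : Set K} : F.extend s ≤ G ↔ F ≤ G ∧ s ⊆ G :=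
  Subfield.closure_le.trans Set.union_subset_iff

lemma extend_extend (F : Subfield K) (s t : Set K) :
    (F.extend s).extend t = F.extend (s ∪ t) := by
  apply le_antisymm
  · obtain ⟨hs, ht⟩ := Set.union_subset_iff.mp (subset_extend F (s ∪ t))
    exact extend_le_iff.mpr ⟨extend_le_iff.mpr ⟨le_extend _ _, hs⟩, ht⟩
  · exact extend_le_iff.mpr ⟨(le_extend _ _).trans (le_extend _ _),
      Set.union_subset ((subset_extend _ _).trans (le_extend _ _)) (subset_extend _ _)⟩

lemma trdeg_eq_cRk_matroid (F E : Subfield K) : F.trdeg E = (matroid F K).cRk E := by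
  rw [← Matroid.cRank_restrict, Matroid.cRank_eq_iSup_cardinalMk_indep]
  exact (Equiv.subtypeEquivRight fun _ => and_comm).iSup_congr fun _ => rfl

lemma closure_matroid_extend (F : Subfield K) (s : Set K) :
    (matroid F K).closure (F.extend s) = (matroid F K).closure s := by
  refine subset_antisymm ?_ ((matroid F K).closure_subset_closure (subset_extend F s))
  rw [Matroid.closure_subset_closure_iff_subset_closure, matroid_closure_eq]
  let algClosure : Subfield K :=
    { Subalgebra.algebraicClosure (Algebra.adjoin F s) K with
      neg_mem' := IsAlgebraic.neg
      inv_mem' := fun _ => IsAlgebraic.inv }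
  have h : F.extend s ≤ algClosure := extend_le_iff.mpr
    ⟨fun a ha => isAlgebraic_algebraMap (algebraMap F (Algebra.adjoin F s) ⟨a, ha⟩),
      fun a ha => isAlgebraic_algebraMap (⟨a, Algebra.subset_adjoin ha⟩ : Algebra.adjoin F s)⟩
  exact h

lemma trdegSet_eq_cRk_matroid (F : Subfield K) (s : Set K) :
    F.trdegSet s = (matroid F K).cRk s := by
  rw [Subfield.trdegSet, trdeg_eq_cRk_matroid]
  exact Matroid.cRk_closure_congr (closure_matroid_extend F s)

lemma trdegSet_mono (F : Subfield K) {s t : Set K} (h : s ⊆ t) : F.trdegSet s ≤ F.trdegSet t := by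
  simpa only [trdegSet_eq_cRk_matroid] using Matroid.cRk_le_of_subset _ h

lemma trdegSet_anti {F G : Subfield K} (h : F ≤ G) (s : Set K) :
    G.trdegSet s ≤ F.trdegSet s := by
  let _ := (Subfield.inclusion h).toAlgebra
  have : IsScalarTower F G K := .of_algebraMap_eq' rfl
  obtain ⟨t, ht⟩ := (matroid G K).exists_isBasis s
  rw [trdegSet_eq_cRk_matroid, trdegSet_eq_cRk_matroid, ← ht.cardinalMk_eq_cRk]
  have hF : (matroid F K).Indep t :=
    AlgebraicIndependent.restrictScalars (FaithfulSMul.algebraMap_injective F G) ht.indep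
  exact hF.cardinalMk_le_cRk_of_subset ht.subset

lemma trdegSet_range_le {ι : Type*} [Fintype ι] (F : Subfield K) (z : ι → K) :
    F.trdegSet (Set.range z) ≤ Fintype.card ι := by
  rw [trdegSet_eq_cRk_matroid, ← Nat.card_eq_fintype_card]
  refine (Matroid.cRk_le_cardinalMk _ _).trans ?_
  rw [← Nat.cast_card]
  exact_mod_cast Finite.card_range_le z

lemma algebraicIndependent_iff_trdegSet_range {ι : Type*} [Fintype ι] {F : Subfield K} {z : ι → K} :
    AlgebraicIndependent F z ↔ F.trdegSet (Set.range z) = Fintype.card ι := by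
  have hfin := Set.finite_range z
  rw [trdegSet_eq_cRk_matroid]
  constructor
  · intro hz
    have hind : (matroid F K).Indep (Set.range z) := hz.to_subtype_range
    rw [← hind.cRk_eq_cardinalMk, ← Nat.cast_card, ← Nat.card_eq_fintype_card,
      Nat.card_range_of_injective hz.injective]
  · intro hz
    obtain ⟨t, ht⟩ := (matroid F K).exists_isBasis (Set.range z)
    have hcard : t.ncard = Nat.card ι := by
      have := (hfin.subset ht.subset).to_subtype
      rw [← ht.cardinalMk_eq_cRk, ← Nat.cast_card] at hz
      rw [Nat.card_eq_fintype_card]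
      exact_mod_cast hz
    have hrange : t = Set.range z :=
      Set.eq_of_subset_of_ncard_le ht.subset (hcard ▸ Finite.card_range_le z) hfin
    have hinj : Function.Injective z := by
      refine Set.rangeFactorization_injective.mp ?_
      refine (Set.rangeFactorization_surjective.bijective_of_nat_card_le ?_).1
      exact (hcard.symm.trans (by rw [hrange]; rfl)).le
    exact (algebraicIndependent_subtype_range hinj).mp (hrange ▸ ht.indep)

lemma exists_transcendental_of_trdegSet_ne_zero {F : Subfield K} {s : Set K}
    (h : F.trdegSet s ≠ 0) : ∃ a ∈ s, Transcendental F a := by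
  obtain ⟨t, ht⟩ := (matroid F K).exists_isBasis s
  rw [trdegSet_eq_cRk_matroid, ← ht.cardinalMk_eq_cRk, Cardinal.mk_ne_zero_iff] at h
  obtain ⟨⟨a, ha⟩⟩ := h
  exact ⟨a, ht.subset ha, ht.indep.transcendental ⟨a, ha⟩⟩

lemma matroid_eq_comap_algebraMap (R S A : Type*) [CommRing R] [CommRing S] [CommRing A]
    [NoZeroDivisors S] [NoZeroDivisors A] [Algebra R S] [Algebra R A] [Algebra S A]
    [IsScalarTower R S A] [FaithfulSMul R S] [FaithfulSMul R A] [FaithfulSMul S A] :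
    matroid R S = (matroid R A).comap (algebraMap S A) := by
  have hinj := FaithfulSMul.algebraMap_injective S A
  refine Matroid.ext_indep (by simp) fun I _ => ?_
  rw [Matroid.comap_indep_iff, and_iff_left hinj.injOn, matroid_indep_iff, matroid_indep_iff,
    AlgebraicIndepOn, AlgebraicIndepOn,
    ← AlgHom.algebraicIndependent_iff (IsScalarTower.toAlgHom R S A) hinj]
  exact algebraicIndependent_image hinj.injOn

lemma trdeg_eq_algebra_trdeg (F E : Subfield K) [Algebra F E] [IsScalarTower F E K] :
    F.trdeg E = Algebra.trdeg F E := by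
  rw [trdeg_eq_cRk_matroid, ← matroid_cRank_eq, ← Matroid.cRk_ground,
    matroid_eq_comap_algebraMap F E K, Matroid.cRk_comap]
  congr 1
  exact Subtype.range_coe.symm.trans Set.image_univ.symm

lemma trdeg_add_trdeg {F E G : Subfield K} (hFE : F ≤ E) (hEG : E ≤ G) :
    F.trdeg E + E.trdeg G = F.trdeg G := by
  let _ := (Subfield.inclusion hFE).toAlgebra
  let _ := (Subfield.inclusion hEG).toAlgebra
  let _ := (Subfield.inclusion (hFE.trans hEG)).toAlgebra
  have : IsScalarTower F E G := .of_algebraMap_eq' rfl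
  have : IsScalarTower F E K := .of_algebraMap_eq' rfl
  have : IsScalarTower E G K := .of_algebraMap_eq' rfl
  have : IsScalarTower F G K := .of_algebraMap_eq' rfl
  simpa only [trdeg_eq_algebra_trdeg] using trdeg_add_eq F E

lemma trdegSet_add_trdegSet_extend (F : Subfield K) (s t : Set K) :
    F.trdegSet s + (F.extend s).trdegSet t = F.trdegSet (s ∪ t) := by
  simpa only [Subfield.trdegSet, extend_extend] using
    trdeg_add_trdeg (le_extend F s) (le_extend (F.extend s) t)

lemma trdegSet_add_trdegSet_extend_comm (F : Subfield K) (s t : Set K) :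
    F.trdegSet s + (F.extend s).trdegSet t = F.trdegSet t + (F.extend t).trdegSet s := by
  rw [trdegSet_add_trdegSet_extend, trdegSet_add_trdegSet_extend, Set.union_comm]

lemma exists_transcendental_extend_of_trdegSet_lt {F : Subfield K} {s t : Set K}
    (h : F.trdegSet s < F.trdegSet t) : ∃ a ∈ t, Transcendental (F.extend s) a := by
  refine exists_transcendental_of_trdegSet_ne_zero fun h0 => h.not_ge ?_
  calc F.trdegSet t ≤ F.trdegSet (s ∪ t) := trdegSet_mono F Set.subset_union_right
    _ = F.trdegSet s := by rw [← trdegSet_add_trdegSet_extend, h0, add_zero]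

end Trdeg

section Hyperplane

variable {ι : Type*}

lemma span_setOf_eval_ne_zero [Finite ι] {F : Type*} [Field F] [Infinite F] {P : MvPolynomial ι F}
    (hP : P ≠ 0) : Submodule.span F {a | eval a P ≠ 0} = ⊤ := by
  classical
  have := Fintype.ofFinite ι
  by_contra hspan
  obtain ⟨f, hf, hle⟩ := Submodule.exists_le_ker_of_lt_top _ (Ne.lt_top hspan)
  let L : MvPolynomial ι F := ∑ i, C (f fun k => if i = k then 1 else 0) * X i
  have eval_L (a : ι → F) : eval a L = f a := by
    simp [L, LinearMap.pi_apply_eq_sum_univ f a, mul_comm]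
  have hL : L ≠ 0 := fun h => hf (LinearMap.ext fun a => by simp [← eval_L, h])
  refine mul_ne_zero hP hL (MvPolynomial.funext fun a => ?_)
  by_cases ha : eval a P = 0
  · simp [ha]
  · have : f a = 0 := hle (Submodule.subset_span ha)
    simp [eval_L, this]

variable {B E : Type*} [Field B] [Field E] [Algebra B E] {G : MvPolynomial ι B}

lemma polynomial_aeval_aeval_C_mul_X (a : ι → B) (r : E) (G : MvPolynomial ι B) :
    Polynomial.aeval r (aeval (fun i => Polynomial.C (a i) * Polynomial.X) G) =
      aeval (fun i => algebraMap B E (a i) * r) G := by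
  simp [comp_aeval_apply]

lemma isAlgebraic_of_aeval_algebraMap_mul_eq_zero {a : ι → B} (ha : eval a G ≠ 0) {r : E}
    (hr : aeval (fun i => algebraMap B E (a i) * r) G = 0) : IsAlgebraic B r := by
  refine ⟨aeval (fun i => Polynomial.C (a i) * Polynomial.X) G, fun h => ha ?_, ?_⟩
  · simpa [h, aeval_eq_eval] using (polynomial_aeval_aeval_C_mul_X a (1 : B) G).symm
  · rw [polynomial_aeval_aeval_C_mul_X, hr]

variable [Fintype ι] {v : ι → E}

lemma isAlgebraic_of_forall_aeval_eq_zero_of_infinite [Infinite B] (hG : G ≠ 0)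
    (h : ∀ b : ι → E, ∑ i, b i * v i = 1 → aeval b G = 0) (i : ι) : IsAlgebraic B (v i) := by
  classical
  let W : Submodule B (ι → B) :=
    (algebraicClosure B E).toSubalgebra.toSubmodule.comap (Fintype.linearCombination B v)
  have mem_W (a : ι → B) : a ∈ W ↔ IsAlgebraic B (∑ i, a i • v i) := by
    simp [W, Fintype.linearCombination_apply, mem_algebraicClosure_iff]
  have hW : W = ⊤ := by
    refine top_le_iff.mp ((span_setOf_eval_ne_zero hG).ge.trans (Submodule.span_le.mpr ?_))
    intro a ha
    rw [SetLike.mem_coe, mem_W]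
    by_cases hs : ∑ i, a i • v i = 0
    · exact hs ▸ isAlgebraic_zero
    refine IsAlgebraic.inv_iff.mp (isAlgebraic_of_aeval_algebraMap_mul_eq_zero ha (h _ ?_))
    rw [← mul_inv_cancel₀ hs, Finset.sum_mul]
    exact Finset.sum_congr rfl fun i _ => by rw [Algebra.smul_def]; ring
  simpa [Pi.single_apply] using (mem_W (Pi.single i 1)).mp (hW ▸ Submodule.mem_top)

lemma isAlgebraic_of_forall_aeval_eq_zero [IsAlgClosed E] (hG : G ≠ 0)
    (h : ∀ b : ι → E, ∑ i, b i * v i = 1 → aeval b G = 0) (i : ι) : IsAlgebraic B (v i) := by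
  have : IsAlgClosed (algebraicClosure B E) := IsAlgClosure.isAlgClosed B
  have : Infinite (algebraicClosure B E) := IsAlgClosed.instInfinite
  refine IsAlgebraic.restrictScalars B (isAlgebraic_of_forall_aeval_eq_zero_of_infinite
    (G := map (algebraMap B (algebraicClosure B E)) G) ?_ (fun b hb => ?_) i)
  · rwa [Ne, map_eq_zero_iff _ (map_injective _ (algebraMap B _).injective)]
  · rw [aeval_map_algebraMap, h b hb]

end Hyperplane

section GenericPoint

variable {ι : Type*} [Fintype ι]

section Coordinates

variable [DecidableEq ι]

lemma eq_inv_mul_one_sub_sum_ne {E : Type*} [Field E] {v b : ι → E} {j : ι} (hj : v j ≠ 0)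
    (hb : ∑ i, b i * v i = 1) : b j = (v j)⁻¹ * (1 - ∑ i : {i // i ≠ j}, v i * b i) := by
  rw [Fintype.sum_eq_add_sum_subtype_ne _ j] at hb
  rw [eq_inv_mul_iff_mul_eq₀ hj, ← hb]
  simp [mul_comm]

variable {L E : Type*} [Field L] [Field E] [Algebra L E]

/-- Restriction of polynomial functions to the hyperplane `Π_v`, on which the coordinates other
than `j` are taken as free parameters. This is meaningful only for `v j ≠ 0`. -/
noncomputable def restrictToHyperplane (v : ι → L) (j : ι) :
    MvPolynomial ι L →ₐ[L] MvPolynomial {i // i ≠ j} L :=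
  aeval fun i => if hi : i = j then C (v j)⁻¹ * (1 - ∑ k : {k // k ≠ j}, C (v k) * X k)
    else X ⟨i, hi⟩

lemma aeval_restrictToHyperplane {v : ι → L} {j : ι} (hj : v j ≠ 0) {b : ι → E}
    (hb : ∑ i, b i * algebraMap L E (v i) = 1) (P : MvPolynomial ι L) :
    aeval (fun i : {i // i ≠ j} => b i) (restrictToHyperplane v j P) = aeval b P := by
  rw [restrictToHyperplane, comp_aeval_apply]
  congr 2
  ext i
  by_cases hi : i = j
  · subst hi
    have hj' : algebraMap L E (v i) ≠ 0 := by simpa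
    simp [eq_inv_mul_one_sub_sum_ne (v := fun k => algebraMap L E (v k)) hj' hb, algHom_C]
  · simp [hi]

end Coordinates

variable {K : Type*} [Field K]

/-- `p` is a generic point over `C` of the hyperplane `Π_v`, whose coefficients lie in `C`: the
transcendence degree of `p` over `C` is the dimension of `Π_v`, which is `card ι - 1`. -/
structure IsGenericHyperplanePoint (C : Subfield K) (v p : ι → K) : Prop where
  coeff_mem : ∀ i, v i ∈ C
  sum_mul_eq_one : ∑ i, p i * v i = 1
  trdegSet_add_one : C.trdegSet (Set.range p) + 1 = Fintype.card ι

namespace IsGenericHyperplanePoint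

section

variable {C : Subfield K} {v p : ι → K} (h : IsGenericHyperplanePoint C v p)

include h

lemma exists_coeff_ne_zero : ∃ j, v j ≠ 0 := by
  by_contra! hv
  simpa [hv] using h.sum_mul_eq_one

lemma algebraicIndependent_ne {j : ι} (hj : v j ≠ 0) :
    AlgebraicIndependent C fun i : {i // i ≠ j} => p i := by
  classical
  let D := C.extend (Set.range fun i : {i // i ≠ j} => p i)
  have hv (i : ι) : v i ∈ D := le_extend _ _ (h.coeff_mem i)
  have hp (i : {i // i ≠ j}) : p i ∈ D := subset_extend _ _ ⟨i, rfl⟩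
  have hpj : p j ∈ D := by
    rw [eq_inv_mul_one_sub_sum_ne hj h.sum_mul_eq_one]
    exact mul_mem (inv_mem (hv j)) (sub_mem (one_mem D) (sum_mem fun i _ => mul_mem (hv i) (hp i)))
  have hD : D = C.extend (Set.range p) := by
    refine le_antisymm (extend_le_iff.mpr ⟨le_extend _ _, ?_⟩)
      (extend_le_iff.mpr ⟨le_extend _ _, ?_⟩)
    · exact (Set.range_comp_subset_range _ p).trans (subset_extend C (Set.range p))
    · rintro _ ⟨i, rfl⟩
      by_cases hi : i = j
      · exact hi ▸ hpj
      · exact hp ⟨i, hi⟩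
  have htrdeg : C.trdegSet (Set.range fun i : {i // i ≠ j} => p i) = C.trdegSet (Set.range p) :=
    congrArg C.trdeg hD
  have hcard : Fintype.card ι = Fintype.card {i // i ≠ j} + 1 := by
    have := Fintype.card_pos_iff.mpr ⟨j⟩
    rw [Fintype.card_subtype_compl, Fintype.card_subtype_eq]
    lia
  rw [algebraicIndependent_iff_trdegSet_range, ← Cardinal.add_one_inj, htrdeg, h.trdegSet_add_one]
  exact_mod_cast hcard

lemma aeval_eq_zero {P : MvPolynomial ι C} (hP : aeval p P = 0) {E : Type*} [Field E] [Algebra C E]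
    {b : ι → E} (hb : ∑ i, b i * algebraMap C E ⟨v i, h.coeff_mem i⟩ = 1) : aeval b P = 0 := by
  classical
  obtain ⟨j, hj⟩ := h.exists_coeff_ne_zero
  let v' : ι → C := fun i => ⟨v i, h.coeff_mem i⟩
  have hj' : v' j ≠ 0 := fun h0 => hj (congrArg Subtype.val h0)
  rw [← aeval_restrictToHyperplane hj' h.sum_mul_eq_one] at hP
  rw [← aeval_restrictToHyperplane hj' hb,
    (injective_iff_map_eq_zero _).mp (h.algebraicIndependent_ne hj) _ hP, map_zero]

lemma algebraicIndependent {B : Subfield K} (hBC : B ≤ C) {j : ι} (hj : Transcendental B (v j)) :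
    AlgebraicIndependent B p := by
  let _ := (Subfield.inclusion hBC).toAlgebra
  have : IsScalarTower B C K := .of_algebraMap_eq' rfl
  have : IsScalarTower B C (AlgebraicClosure K) := .of_algebraMap_eq' rfl
  refine (injective_iff_map_eq_zero _).mpr fun G hG => ?_
  by_contra hG0
  have hvj : IsAlgebraic B (algebraMap K (AlgebraicClosure K) (v j)) := by
    refine isAlgebraic_of_forall_aeval_eq_zero hG0 (v := fun i => algebraMap K _ (v i))
      (fun b hb => ?_) j
    rw [← aeval_map_algebraMap C] at hG ⊢
    exact h.aeval_eq_zero hG hb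
  exact hj ((isAlgebraic_algebraMap_iff (algebraMap K (AlgebraicClosure K)).injective).mp hvj)

end

variable {A : Subfield K} {v p : ι → K} (h : IsGenericHyperplanePoint (A.extend (Set.range v)) v p)
  {t : Set K}

include h

lemma trdegSet_extend_add_one (hv : A.trdegSet (Set.range v) ≠ 0) :
    (A.extend (Set.range p)).trdegSet (Set.range v) + 1 = A.trdegSet (Set.range v) := by
  obtain ⟨_, ⟨j, rfl⟩, hj⟩ := exists_transcendental_of_trdegSet_ne_zero hv
  have hp := algebraicIndependent_iff_trdegSet_range.mp
    (h.algebraicIndependent (le_extend A (Set.range v)) hj)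
  rw [← Cardinal.add_nat_inj (Fintype.card ι)]
  calc (A.extend (Set.range p)).trdegSet (Set.range v) + 1 + Fintype.card ι
      = A.trdegSet (Set.range p) + (A.extend (Set.range p)).trdegSet (Set.range v) + 1 := by
        rw [hp]; ring
    _ = A.trdegSet (Set.range v) + (A.extend (Set.range v)).trdegSet (Set.range p) + 1 := by
        rw [trdegSet_add_trdegSet_extend_comm]
    _ = A.trdegSet (Set.range v) + Fintype.card ι := by rw [add_assoc, h.trdegSet_add_one]

lemma trdegSet_le_extend_add_one (ht : t ⊆ A.extend (Set.range v)) :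
    A.trdegSet t ≤ (A.extend (Set.range p)).trdegSet t + 1 := by
  rw [← Cardinal.add_nat_le_add_nat_iff (Fintype.card ι)]
  calc A.trdegSet t + Fintype.card ι
      = A.trdegSet t + (A.extend (Set.range v)).trdegSet (Set.range p) + 1 := by
        rw [add_assoc, h.trdegSet_add_one]
    _ ≤ A.trdegSet t + (A.extend t).trdegSet (Set.range p) + 1 := by
        gcongr
        exact trdegSet_anti (extend_le_iff.mpr ⟨le_extend _ _, ht⟩) _
    _ = A.trdegSet (Set.range p) + (A.extend (Set.range p)).trdegSet t + 1 := by
        rw [trdegSet_add_trdegSet_extend_comm]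
    _ ≤ Fintype.card ι + (A.extend (Set.range p)).trdegSet t + 1 := by
        gcongr
        exact trdegSet_range_le A p
    _ = (A.extend (Set.range p)).trdegSet t + 1 + Fintype.card ι := by ring

lemma trdegSet_extend_eq (ht : t ⊆ A.extend (Set.range v))
    (hlt : A.trdegSet t < A.trdegSet (Set.range v)) :
    (A.extend (Set.range p)).trdegSet t = A.trdegSet t := by
  obtain ⟨_, ⟨j, rfl⟩, hj⟩ := exists_transcendental_extend_of_trdegSet_lt hlt
  have hpt := algebraicIndependent_iff_trdegSet_range.mp
    (h.algebraicIndependent (extend_le_iff.mpr ⟨le_extend _ _, ht⟩) hj)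
  have hp : A.trdegSet (Set.range p) = Fintype.card ι :=
    (trdegSet_range_le A p).antisymm (hpt ▸ trdegSet_anti (le_extend A t) _)
  rw [← Cardinal.add_nat_inj (Fintype.card ι), add_comm, ← hp, ← trdegSet_add_trdegSet_extend_comm,
    hpt, hp]

lemma natCast_le_trdegSet_extend {k : ℕ} (ht : t ⊆ A.extend (Set.range v))
    (hk : k ≤ A.trdegSet t) (hkv : k < A.trdegSet (Set.range v)) :
    k ≤ (A.extend (Set.range p)).trdegSet t := by
  rcases hk.eq_or_lt with heq | hlt
  · exact (heq.trans (h.trdegSet_extend_eq ht (heq ▸ hkv)).symm).le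
  · rw [← Cardinal.add_one_le_add_one_iff]
    exact (Cardinal.add_one_le_of_lt hlt).trans (h.trdegSet_le_extend_add_one ht)

end IsGenericHyperplanePoint

end GenericPoint

theorem generic_hyperplane_normal_general {K ι : Type*} [Field K] [Fintype ι]
    (A : Subfield K) (x y p q : ι → K)
    (hnormal : ∀ s : Finset ι, s.Nonempty →
      (s.card : Cardinal) ≤ A.trdegSet (x '' ↑s ∪ y '' ↑s))
    (hdim : (Fintype.card ι : Cardinal) < A.trdegSet (Set.range x ∪ Set.range y))
    (hmem : ∑ i, (p i * x i + q i * y i) = 1)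
    (hgen : Subfield.trdegSet (A.extend (Set.range x ∪ Set.range y))
      (Set.range p ∪ Set.range q) = ((2 * Fintype.card ι - 1 : ℕ) : Cardinal)) :
    Subfield.trdegSet (A.extend (Set.range p ∪ Set.range q)) (Set.range x ∪ Set.range y) + 1 =
      A.trdegSet (Set.range x ∪ Set.range y) ∧
    ∀ s : Finset ι, s.Nonempty →
      (s.card : Cardinal) ≤
        Subfield.trdegSet (A.extend (Set.range p ∪ Set.range q)) (x '' ↑s ∪ y '' ↑s) := by
  have : Nonempty ι := by
    by_contra! _
    simp at hmem
  have hcard : 2 * Fintype.card ι - 1 + 1 = Fintype.card (ι ⊕ ι) := by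
    have := Fintype.card_pos (α := ι)
    rw [Fintype.card_sum]; lia
  simp only [← Set.Sum.elim_range] at hdim hgen ⊢
  have h : IsGenericHyperplanePoint (A.extend (Set.range (Sum.elim x y)))
      (Sum.elim x y) (Sum.elim p q) :=
    { coeff_mem := fun i => subset_extend _ _ ⟨i, rfl⟩
      sum_mul_eq_one := by simpa [Finset.sum_add_distrib] using hmem
      trdegSet_add_one := by rw [hgen]; exact_mod_cast hcard }
  refine ⟨h.trdegSet_extend_add_one (zero_le.trans_lt hdim).ne', fun s hs =>
    h.natCast_le_trdegSet_extend ?_ (hnormal s hs) (hdim.trans_le' ?_)⟩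
  · rw [Set.Sum.elim_range]
    exact (Set.union_subset_union (Set.image_subset_range _ _) (Set.image_subset_range _ _)).trans
      (subset_extend _ _)
  · exact_mod_cast s.card_le_univ

/-- Intersecting a normal variety of dimension `> n` with a generic hyperplane yields a
normal variety of dimension one lower.  Here `v̄ = (x̄, ȳ) ∈ K^{2n}` is a point whose
locus over `A` is normal, of transcendence degree `> n` over `A`, and `p̄ = (p̄, q̄)` is a
generic point over `A(v̄)` of the hyperplane `Π_{v̄}`. -/
theorem generic_hyperplane_normal {K : Type*} [Field K] [CharZero K] [IsAlgClosed K]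
    (A : Subfield K) (n : ℕ) (hn : 1 ≤ n) (x y p q : Fin n → K)
    (hnormal : ∀ s : Finset (Fin n), s.Nonempty →
      (s.card : Cardinal) ≤ A.trdegSet (x '' ↑s ∪ y '' ↑s))
    (hdim : (n : Cardinal) < A.trdegSet (Set.range x ∪ Set.range y))
    (hmem : ∑ i, (p i * x i + q i * y i) = 1)
    (hgen : Subfield.trdegSet (A.extend (Set.range x ∪ Set.range y))
      (Set.range p ∪ Set.range q) = ((2 * n - 1 : ℕ) : Cardinal)) :
    Subfield.trdegSet (A.extend (Set.range p ∪ Set.range q)) (Set.range x ∪ Set.range y) + 1 =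
      A.trdegSet (Set.range x ∪ Set.range y) ∧
    ∀ s : Finset (Fin n), s.Nonempty →
      (s.card : Cardinal) ≤
        Subfield.trdegSet (A.extend (Set.range p ∪ Set.range q)) (x '' ↑s ∪ y '' ↑s) := by
  exact generic_hyperplane_normal_general A x y p q hnormal (by simpa using hdim) hmem
    (by simpa using hgen)
end

section
/- Let K be an algebraically closed field of characteristic zero and C ⊆ K an algebraically closed subfield. Let P ⊆ K[X₁,…,Xₙ] be a prime ideal, let V ⊆ Kⁿ be its zero set, and let d be the Krull dimension of K[X₁,…,Xₙ]/P. Suppose that for every subfield A ⊆ K that is finitely generated as a field extension of ℚ and over which V is defined, there exists a point d̄ ∈ Cⁿ with d̄ ∈ V and trdeg_A(d̄) = d (a C-point of V generic over A). Then V is defined over C. -/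
/-- The transcendence degree over a subfield `F` of the subfield generated by `F`
and the entries of a tuple `w`. -/
noncomputable def Subfield.trdegTuple {K : Type*} [Field K] (F : Subfield K)
    {m : ℕ} (w : Fin m → K) : Cardinal :=
  Subfield.trdeg F (F.extend (Set.range w))

/-- A variety with vanishing prime ideal `P ⊆ K[X₁,…,Xₙ]` is defined over a subfield `F`
if `P` is generated, as an ideal, by `P ∩ F[X₁,…,Xₙ]`. -/
def DefinedOver {K : Type*} [Field K] {n : ℕ} (P : Ideal (MvPolynomial (Fin n) K))
    (F : Subfield K) : Prop :=
  P = Ideal.span {f : MvPolynomial (Fin n) K | f ∈ P ∧ ∀ m, f.coeff m ∈ F}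

/-!
Over a field of definition `A` of `V`, a point of `V` of transcendence degree `dim V` has no
relations over `A` other than those of `V`: both `A[X] ⧸ (P ∩ A[X])` and its quotient `A[x]` have
dimension `dim V`, and a proper quotient of a domain of finite dimension has smaller dimension.
Given a polynomial `f` that vanishes at all `C`-points of `V`, take for `A` a field generated by the
coefficients of `f` and of generators of `P`; a `C`-point generic over `A` then shows that `f ∈ P`.
So `P` is the vanishing ideal of a set of `C`-points, and such an ideal is generated over `C`:
expand a polynomial along a basis of `K` over `C` and evaluate.
-/

section KrullDimension

variable {R S : Type*} [CommRing R] [CommRing S]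

theorem ringKrullDim_le_of_isIntegral [Algebra R S] [Algebra.IsIntegral R S] [FaithfulSMul R S] :
    ringKrullDim R ≤ ringKrullDim S := by
  refine iSup_le fun l ↦ ?_
  obtain ⟨q, hq⟩ := Algebra.IsIntegral.comap_surjective R S l.head
  have : q.asIdeal.LiesOver l.head.asIdeal := ⟨congrArg PrimeSpectrum.asIdeal hq.symm⟩
  obtain ⟨l', hlen, -⟩ := Ideal.exists_ltSeries_of_hasGoingUp l q.asIdeal
  exact hlen ▸ Order.LTSeries.length_le_krullDim l'

theorem ringKrullDim_le_of_faithfullyFlat [Algebra R S] [Module.FaithfullyFlat R S] :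
    ringKrullDim R ≤ ringKrullDim S := by
  refine iSup_le fun l ↦ ?_
  obtain ⟨q, hq⟩ := PrimeSpectrum.comap_surjective_of_faithfullyFlat (B := S) l.last
  have : q.asIdeal.LiesOver l.last.asIdeal := ⟨congrArg PrimeSpectrum.asIdeal hq.symm⟩
  obtain ⟨l', hlen, -⟩ := Ideal.exists_ltSeries_of_hasGoingDown l q.asIdeal
  exact hlen ▸ Order.LTSeries.length_le_krullDim l'

theorem ringKrullDim_quotient_le_map [Algebra R S] [Module.FaithfullyFlat R S] (I : Ideal R) :
    ringKrullDim (R ⧸ I) ≤ ringKrullDim (S ⧸ I.map (algebraMap R S)) := by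
  rw [ringKrullDim_eq_of_ringEquiv
    (Algebra.TensorProduct.quotIdealMapEquivQuotTensor S I).toRingEquiv]
  exact ringKrullDim_le_of_faithfullyFlat

theorem eq_of_le_of_ringKrullDim_quotient_le {I J : Ideal R} [I.IsPrime] (hIJ : I ≤ J) {d : ℕ}
    (hI : ringKrullDim (R ⧸ I) ≤ d) (hJ : d ≤ ringKrullDim (R ⧸ J)) : I = J := by
  refine hIJ.antisymm fun r hr ↦ by_contra fun hrI ↦ ?_
  have hr_ne_zero : Ideal.Quotient.mk I r ≠ 0 := mt Ideal.Quotient.eq_zero_iff_mem.1 hrI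
  have hsucc : ringKrullDim (R ⧸ J) + 1 ≤ ringKrullDim (R ⧸ I) :=
    ringKrullDim_succ_le_of_surjective (Ideal.Quotient.factor hIJ)
      (Ideal.Quotient.factor_surjective hIJ) (mem_nonZeroDivisors_of_ne_zero hr_ne_zero)
      (by simpa using Ideal.Quotient.eq_zero_iff_mem.2 hr)
  have hlt : ((d + 1 : ℕ) : WithBot ℕ∞) ≤ d := by
    push_cast
    exact (add_le_add_left hJ 1).trans (hsucc.trans hI)
  exact Nat.not_succ_le_self d (by exact_mod_cast hlt)

theorem toENat_trdeg_le_ringKrullDim (k R : Type*) [Field k] [CommRing R] [IsDomain R]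
    [Algebra k R] [Algebra.FiniteType k R] :
    (Cardinal.toENat (Algebra.trdeg k R) : WithBot ℕ∞) ≤ ringKrullDim R := by
  obtain ⟨s, g, hg, hgi⟩ := exists_integral_inj_algHom_of_fg k R
  algebraize [g.toRingHom]
  have : FaithfulSMul (MvPolynomial (Fin s) k) R := (faithfulSMul_iff_algebraMap_injective _ _).2 hg
  have : IsScalarTower k (MvPolynomial (Fin s) k) R := IsScalarTower.of_algHom g
  have : Algebra.IsIntegral (MvPolynomial (Fin s) k) R := ⟨hgi⟩
  have htrdeg : Algebra.trdeg k R = s := by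
    have := ((IsTranscendenceBasis.mvPolynomial (Fin s) k).algebraMap_comp
      (A := R)).lift_cardinalMk_eq_trdeg
    simpa using this.symm
  calc (Cardinal.toENat (Algebra.trdeg k R) : WithBot ℕ∞)
      = ringKrullDim (MvPolynomial (Fin s) k) := by simp [htrdeg]
    _ ≤ ringKrullDim R := ringKrullDim_le_of_isIntegral

end KrullDimension

section TranscendenceDegree

open IntermediateField.algebraAdjoinAdjoin in
theorem trdeg_intermediateField_adjoin (k : Type*) {E : Type*} [Field k] [Field E] [Algebra k E]
    (s : Set E) :
    Algebra.trdeg k (IntermediateField.adjoin k s) = Algebra.trdeg k (Algebra.adjoin k s) := by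
  rw [← trdeg_add_eq k (Algebra.adjoin k s) (A := IntermediateField.adjoin k s),
    trdeg_eq_zero (R := Algebra.adjoin k s), add_zero]

variable {K : Type*} [Field K] (F : Subfield K)

theorem subfieldTrdeg_toSubfield (L : IntermediateField F K) :
    F.trdeg L.toSubfield = Algebra.trdeg F L := by
  refine le_antisymm (ciSup_le' fun ⟨t, htL, ht⟩ ↦ ?_) (ciSup_le' fun ⟨t, ht⟩ ↦ ?_)
  · have : AlgebraicIndependent F (fun x : t ↦ (⟨x, htL x.2⟩ : L)) := .of_comp L.val ht
    exact this.cardinalMk_le_trdeg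
  · let t' : {t : Set K // t ⊆ (L.toSubfield : Set K) ∧ AlgebraicIndependent F ((↑) : t → K)} :=
      ⟨L.val '' t, by rintro _ ⟨x, -, rfl⟩; exact x.2, (ht.map' L.val.injective).image⟩
    rw [← Cardinal.mk_image_eq L.val.injective]
    exact le_ciSup (Cardinal.bddAbove_of_small) t'

theorem trdegTuple_eq_trdeg_adjoin {m : ℕ} (w : Fin m → K) :
    F.trdegTuple w = Algebra.trdeg F (Algebra.adjoin F (Set.range w)) := by
  have hext : F.extend (Set.range w) = (IntermediateField.adjoin F (Set.range w)).toSubfield := by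
    simp [Subfield.extend, IntermediateField.adjoin_toSubfield, Subfield.algebraMap_ofSubfield]
  rw [Subfield.trdegTuple, hext, subfieldTrdeg_toSubfield, trdeg_intermediateField_adjoin]

end TranscendenceDegree

section VanishingIdeal

open MvPolynomial

attribute [local instance] MvPolynomial.algebraMvPolynomial

theorem faithfullyFlat_mvPolynomial (σ R S : Type*) [CommRing R] [CommRing S] [Algebra R S]
    [Module.FaithfullyFlat R S] :
    Module.FaithfullyFlat (MvPolynomial σ R) (MvPolynomial σ S) :=
  have : Algebra.IsPushout R (MvPolynomial σ R) S (MvPolynomial σ S) := .symm inferInstance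
  .of_linearEquiv _ _ this.out.equiv.symm

variable {σ F K : Type*} [Field F] [Field K] [Algebra F K]

theorem aeval_algebraMap_mvPolynomial (x : σ → K) (g : MvPolynomial σ F) :
    aeval x (algebraMap (MvPolynomial σ F) (MvPolynomial σ K) g) = aeval x g :=
  aeval_map_algebraMap K x g

theorem aeval_comp_algebraMap_mvPolynomial (y : σ → F) (g : MvPolynomial σ F) :
    aeval (algebraMap F K ∘ y) (algebraMap (MvPolynomial σ F) (MvPolynomial σ K) g) =
      algebraMap F K (aeval y g) :=
  (aeval_map_algebraMap K _ g).trans (aeval_algebraMap_apply K y g)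

theorem vanishingIdeal_image_algebraMap (V : Set (σ → F)) :
    vanishingIdeal K ((algebraMap F K ∘ ·) '' V) =
      (vanishingIdeal F V).map (algebraMap (MvPolynomial σ F) (MvPolynomial σ K)) := by
  refine le_antisymm (fun f hf ↦ ?_) (Ideal.map_le_iff_le_comap.2 fun g hg ↦ ?_)
  · have hpush : Algebra.IsPushout F (MvPolynomial σ F) K (MvPolynomial σ K) := .symm inferInstance
    let b := Module.Basis.ofVectorSpace F K
    let B := hpush.out.basis b
    have hB (i) : B i = C (b i) := hpush.out.basis_apply b i
    let g := B.repr f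
    have hfg : f = ∑ i ∈ g.support, algebraMap _ _ (g i) * C (b i) := by
      simpa only [Finsupp.linearCombination_apply, Finsupp.sum, Algebra.smul_def, hB]
        using (B.linearCombination_repr f).symm
    have hg (i) (hi : i ∈ g.support) : g i ∈ vanishingIdeal F V := fun y hy ↦ by
      have hsum : ∑ i ∈ g.support, aeval y (g i) • b i = 0 := calc
        _ = aeval (algebraMap F K ∘ y) f := by
          simp only [hfg, map_sum, map_mul, aeval_comp_algebraMap_mvPolynomial, aeval_C,
            Algebra.smul_def, Algebra.algebraMap_self_apply]
        _ = 0 := hf _ ⟨y, hy, rfl⟩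
      exact linearIndependent_iff'.1 b.linearIndependent _ _ hsum i hi
    exact hfg ▸ Ideal.sum_mem _ fun i hi ↦
      Ideal.mul_mem_right _ _ (Ideal.mem_map_of_mem _ (hg i hi))
  · rintro _ ⟨y, hy, rfl⟩
    rw [aeval_comp_algebraMap_mvPolynomial, hg y hy, map_zero]

theorem ringKrullDim_quotient_vanishingIdeal_singleton (x : σ → K) :
    ringKrullDim (MvPolynomial σ F ⧸ vanishingIdeal F {x}) =
      ringKrullDim (Algebra.adjoin F (Set.range x)) := by
  have hker : vanishingIdeal F {x} = RingHom.ker (aeval x : MvPolynomial σ F →ₐ[F] K) := by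
    ext p
    rw [RingHom.mem_ker, mem_vanishingIdeal_singleton_iff]
  rw [hker, Algebra.adjoin_range_eq_range_aeval]
  exact ringKrullDim_eq_of_ringEquiv
    (Ideal.quotientKerEquivRange (aeval x : MvPolynomial σ F →ₐ[F] K)).toRingEquiv

theorem eq_vanishingIdeal_singleton_of_le_trdeg [Finite σ] {Q : Ideal (MvPolynomial σ F)}
    [Q.IsPrime] {d : ℕ} (hd : ringKrullDim (MvPolynomial σ F ⧸ Q) ≤ d) {x : σ → K}
    (hx : x ∈ zeroLocus K Q) (htr : d ≤ Algebra.trdeg F (Algebra.adjoin F (Set.range x))) :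
    Q = vanishingIdeal F {x} := by
  have hle : Q ≤ vanishingIdeal F {x} :=
    le_zeroLocus_iff_le_vanishingIdeal.1 (Set.singleton_subset_iff.2 hx)
  have : Algebra.FiniteType F (Algebra.adjoin F (Set.range x)) :=
    Algebra.FiniteType.adjoin_of_finite (Set.finite_range x)
  refine eq_of_le_of_ringKrullDim_quotient_le hle hd ?_
  calc (d : WithBot ℕ∞)
      ≤ (Cardinal.toENat (Algebra.trdeg F (Algebra.adjoin F (Set.range x))) : WithBot ℕ∞) := by
        exact_mod_cast Cardinal.natCast_le_toENat.2 htr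
    _ ≤ ringKrullDim (Algebra.adjoin F (Set.range x)) := toENat_trdeg_le_ringKrullDim F _
    _ = ringKrullDim (MvPolynomial σ F ⧸ vanishingIdeal F {x}) :=
        (ringKrullDim_quotient_vanishingIdeal_singleton x).symm

end VanishingIdeal

section DefinedOver

open MvPolynomial

attribute [local instance] MvPolynomial.algebraMvPolynomial

variable {K : Type*} [Field K]

theorem mem_range_algebraMap_mvPolynomial_iff {σ : Type*} {F : Subfield K} {f : MvPolynomial σ K} :
    f ∈ Set.range (algebraMap (MvPolynomial σ F) (MvPolynomial σ K)) ↔ ∀ m, f.coeff m ∈ F := by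
  have hF : Set.range (algebraMap F K) = F := Subtype.range_coe
  rw [MvPolynomial.algebraMap_def, mem_range_map_iff_coeffs_subset, hF]
  refine ⟨fun h m ↦ ?_, fun h a ha ↦ ?_⟩
  · by_cases hm : f.coeff m = 0
    · exact hm ▸ zero_mem F
    · exact h (coeff_mem_coeffs m hm)
  · obtain ⟨m, -, rfl⟩ := mem_coeffs_iff.1 ha
    exact h m

variable {n : ℕ} {P : Ideal (MvPolynomial (Fin n) K)}

theorem definedOver_iff_map_comap_eq {F : Subfield K} :
    DefinedOver P F ↔ (P.comap (algebraMap (MvPolynomial (Fin n) F) _)).map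
      (algebraMap _ (MvPolynomial (Fin n) K)) = P := by
  have himage : algebraMap (MvPolynomial (Fin n) F) (MvPolynomial (Fin n) K) ''
      P.comap (algebraMap (MvPolynomial (Fin n) F) _) =
        {f : MvPolynomial (Fin n) K | f ∈ P ∧ ∀ m, f.coeff m ∈ F} := by
    simp_rw [← mem_range_algebraMap_mvPolynomial_iff]
    exact Set.image_preimage_eq_inter_range
  rw [DefinedOver, ← himage, eq_comm, Ideal.map]

theorem exists_finset_definedOver (P : Ideal (MvPolynomial (Fin n) K))
    (f : MvPolynomial (Fin n) K) :
    ∃ s : Finset K, DefinedOver P (Subfield.closure s) ∧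
      ∀ m, f.coeff m ∈ Subfield.closure (s : Set K) := by
  classical
  obtain ⟨t, ht⟩ := IsNoetherian.noetherian P
  have hcoeff (g) (hg : g ∈ insert f t) (m) :
      g.coeff m ∈ Subfield.closure (((insert f t).biUnion coeffs : Finset K) : Set K) := by
    by_cases hm : g.coeff m = 0
    · exact hm ▸ zero_mem _
    · exact Subfield.subset_closure (Finset.mem_biUnion.2 ⟨g, hg, coeff_mem_coeffs m hm⟩)
  refine ⟨(insert f t).biUnion coeffs, le_antisymm ?_ (Ideal.span_le.2 fun g hg ↦ hg.1),
    hcoeff f (Finset.mem_insert_self f t)⟩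
  exact ht ▸ Ideal.span_mono fun g hg ↦
    ⟨Ideal.subset_span hg, hcoeff g (Finset.mem_insert_of_mem hg)⟩

theorem DefinedOver.comap_eq_vanishingIdeal_singleton [P.IsPrime] {F : Subfield K}
    (hPF : DefinedOver P F) {d : ℕ} (hd : ringKrullDim (MvPolynomial (Fin n) K ⧸ P) ≤ d)
    {x : Fin n → K} (hx : x ∈ zeroLocus K P) (htr : d ≤ F.trdegTuple x) :
    P.comap (algebraMap (MvPolynomial (Fin n) F) _) = vanishingIdeal F {x} := by
  have := faithfullyFlat_mvPolynomial (Fin n) F K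
  refine eq_vanishingIdeal_singleton_of_le_trdeg (d := d) ?_ (fun g hg ↦ ?_) ?_
  · calc ringKrullDim (MvPolynomial (Fin n) F ⧸ P.comap (algebraMap (MvPolynomial (Fin n) F) _))
        ≤ _ := ringKrullDim_quotient_le_map (S := MvPolynomial (Fin n) K) _
      _ ≤ d := by rwa [definedOver_iff_map_comap_eq.1 hPF]
  · exact (aeval_algebraMap_mvPolynomial x g).symm.trans (hx _ hg)
  · rwa [← trdegTuple_eq_trdeg_adjoin]

theorem definedOver_of_generic_constant_points_general (C : Subfield K) [P.IsPrime] {d : ℕ}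
    (hd : ringKrullDim (MvPolynomial (Fin n) K ⧸ P) = d)
    (hgen : ∀ A : Subfield K, (∃ s : Finset K, A = Subfield.closure ↑s) → DefinedOver P A →
      ∃ db : Fin n → K, (∀ i, db i ∈ C) ∧ (∀ f ∈ P, MvPolynomial.eval db f = 0) ∧
        Subfield.trdegTuple A db = (d : Cardinal)) :
    DefinedOver P C := by
  let V : Set (Fin n → C) := {y | algebraMap C K ∘ y ∈ zeroLocus K P}
  suffices hPV : P = vanishingIdeal K ((algebraMap C K ∘ ·) '' V) by
    rw [hPV, vanishingIdeal_image_algebraMap, definedOver_iff_map_comap_eq, Ideal.map_comap_map]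
  have hV : (algebraMap C K ∘ ·) '' V ⊆ zeroLocus K P := Set.image_subset_iff.2 fun _ ↦ id
  refine le_antisymm (le_zeroLocus_iff_le_vanishingIdeal.1 hV) fun f hf ↦ ?_
  obtain ⟨s, hPA, hfs⟩ := exists_finset_definedOver P f
  obtain ⟨x, hxC, hx, htr⟩ := hgen _ ⟨s, rfl⟩ hPA
  obtain ⟨g, rfl⟩ := mem_range_algebraMap_mvPolynomial_iff.2 hfs
  have hgx : g ∈ vanishingIdeal _ {x} := (mem_vanishingIdeal_singleton_iff x g).2 <|
    (aeval_algebraMap_mvPolynomial x g).symm.trans (hf x ⟨fun i ↦ ⟨x i, hxC i⟩, hx, rfl⟩)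
  exact (hPA.comap_eq_vanishingIdeal_singleton hd.le hx htr.ge).ge hgx

end DefinedOver

/-- If an irreducible variety `V ⊆ Kⁿ` has, over every finitely generated field of
definition `A`, a generic point with coordinates in an algebraically closed subfield
`C`, then `V` is defined over `C`. -/
theorem definedOver_of_generic_constant_points {K : Type*} [Field K] [CharZero K]
    [IsAlgClosed K] (C : Subfield K) [IsAlgClosed C]
    (n : ℕ) (P : Ideal (MvPolynomial (Fin n) K)) (hP : P.IsPrime)
    (d : ℕ) (hd : ringKrullDim (MvPolynomial (Fin n) K ⧸ P) = d)
    (hgen : ∀ A : Subfield K, (∃ s : Finset K, A = Subfield.closure ↑s) →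
      DefinedOver P A →
      ∃ db : Fin n → K, (∀ i, db i ∈ C) ∧ (∀ f ∈ P, MvPolynomial.eval db f = 0) ∧
        Subfield.trdegTuple A db = (d : Cardinal)) :
    DefinedOver P C :=
  definedOver_of_generic_constant_points_general C hd hgen
end
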